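/- Let C be a smooth addable class of finite simple graphs with C_n nonempty for every n ≥ 1, let H₁ and H₂ be non-isomorphic finite connected simple graphs, and let k₁, k₂ ∈ ℕ. Then the probability that the uniformly random graph R_n(C) has exactly k₁ connected components isomorphic to H₁ and exactly k₂ connected components isomorphic to H₂ converges, and its limit equals the product of the limits of the probabilities of the two individual events; that is, these events are asymptotically independent. -/

import Mathlib

open Filter Topology FirstOrder

/-- A class of finite simple graphs, given as a property of simple graphs
on arbitrary finite vertex types. -/
abbrev GraphClassOn := ∀ (V : Type) [Finite V], SimpleGraph V → Prop

/-- The class is invariant under graph isomorphism. -/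
def ClassIsoInvariant (C : GraphClassOn) : Prop :=
  ∀ (V W : Type) [Finite V] [Finite W] (G : SimpleGraph V) (H : SimpleGraph W),
    Nonempty (G ≃g H) → (C V G ↔ C W H)

/-- The class is bridge-addable: one may add an edge between two vertices lying in
distinct connected components. -/
def ClassBridgeAddable (C : GraphClassOn) : Prop :=
  ∀ (V : Type) [Finite V] (G : SimpleGraph V) (u v : V),
    C V G → ¬G.Reachable u v → C V (G ⊔ SimpleGraph.fromEdgeSet {s(u, v)})

/-- The class is decomposable: a graph belongs to the class iff each of its connected
components does. -/
def ClassDecomposable (C : GraphClassOn) : Prop :=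
  ∀ (V : Type) [Finite V] (G : SimpleGraph V),
    C V G ↔ ∀ c : G.ConnectedComponent, C c.supp (G.induce c.supp)

/-- Addable = decomposable and bridge-addable. -/
def ClassAddable (C : GraphClassOn) : Prop :=
  ClassDecomposable C ∧ ClassBridgeAddable C

/-- The number of graphs in the class on the vertex set `Fin n`. -/
noncomputable def classCount (C : GraphClassOn) (n : ℕ) : ℕ :=
  Nat.card {G : SimpleGraph (Fin n) // C (Fin n) G}

/-- The class is small: `c_n ≤ d^n · n!` for some real `d`. -/
def ClassSmall (C : GraphClassOn) : Prop :=
  ∃ d : ℝ, ∀ n : ℕ, (classCount C n : ℝ) ≤ d ^ n * n.factorial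

/-- The class is smooth: `c_n / (n · c_{n-1})` tends to a finite limit. -/
def ClassSmooth (C : GraphClassOn) : Prop :=
  ∃ γ : ℝ, Tendsto (fun n : ℕ => (classCount C n : ℝ) / (n * classCount C (n - 1)))
    atTop (𝓝 γ)

/-- The probability that a uniformly random graph from the class on `Fin n`
satisfies the property `P`. -/
noncomputable def classProb (C : GraphClassOn) (n : ℕ) (P : SimpleGraph (Fin n) → Prop) : ℝ :=
  (Nat.card {G : SimpleGraph (Fin n) // C (Fin n) G ∧ P G} : ℝ) / (classCount C n : ℝ)

/-- The probability that a uniformly random *connected* graph from the class on `Fin n`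
satisfies the property `P`. -/
noncomputable def connClassProb (C : GraphClassOn) (n : ℕ)
    (P : SimpleGraph (Fin n) → Prop) : ℝ :=
  (Nat.card {G : SimpleGraph (Fin n) // (C (Fin n) G ∧ G.Connected) ∧ P G} : ℝ) /
    (Nat.card {G : SimpleGraph (Fin n) // C (Fin n) G ∧ G.Connected} : ℝ)

/-- Satisfaction of a first-order sentence in the language of graphs in a simple graph. -/
def SatFO {V : Type} (G : SimpleGraph V) (φ : Language.graph.Sentence) : Prop :=
  letI := G.structure
  V ⊨ φ

/-- The rooted graph `(H, r)` appears in `G` on the vertex set `W`: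
the induced subgraph of `G` on `W` is isomorphic to `H` via an isomorphism sending some
`w ∈ W` to `r`, every edge of `G` joining `W` to its complement is incident on `w`,
and there is exactly one such edge. -/
def AppearsAt {VH V : Type} (H : SimpleGraph VH) (r : VH) (G : SimpleGraph V)
    (W : Set V) : Prop :=
  ∃ (w : V) (hw : w ∈ W) (e : G.induce W ≃g H),
    e ⟨w, hw⟩ = r ∧
    (∀ a ∈ W, ∀ b ∉ W, G.Adj a b → a = w) ∧
    (∃! b, b ∉ W ∧ G.Adj w b)

/-- The rooted graph `(H, r)` appears in `G`. -/
def Appears {VH V : Type} (H : SimpleGraph VH) (r : VH) (G : SimpleGraph V) : Prop :=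
  ∃ W : Set V, AppearsAt H r G W

/-- The number of appearances of the rooted graph `(H, r)` in `G`, i.e. the number of
vertex sets `W` witnessing an appearance. -/
noncomputable def numAppearances {VH V : Type} (H : SimpleGraph VH) (r : VH)
    (G : SimpleGraph V) : ℕ :=
  Nat.card {W : Set V // AppearsAt H r G W}

/-- The number of connected components of `G` whose induced subgraph is isomorphic
to `H`. -/
noncomputable def numComponentsIso {V VH : Type} (G : SimpleGraph V)
    (H : SimpleGraph VH) : ℕ :=
  Nat.card {c : G.ConnectedComponent // Nonempty (G.induce c.supp ≃g H)}

/-!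
Splitting a labelled copy of a connected graph `H` with `h` vertices off a graph with `k + 1`
components isomorphic to `H` gives a double counting: if `B_k` is the exponential generating
function of the graphs of a class `D` with exactly `k` such components, and `D` is stable under
adding and removing copies of `H`, then `(k + 1) |Aut H| B_{k+1} = x ^ h B_k`. Summing over `k`,
`D = exp (x ^ h / |Aut H|) B_0`, hence
`B_k = (x ^ h / |Aut H|) ^ k / k! * exp (-x ^ h / |Aut H|) * D`.
The factor in front of `D` is entire. When `c_n / (n c_{n-1})` tends to `γ ≠ 0`, Schur's lemma
shows that multiplying by it multiplies the limit of `d_n / c_n` by its value at `1 / γ`, a Poisson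
probability independent of `D`; when `γ = 0`, the recursion alone makes the limit `0`. Taking
`D = C` gives the marginal limits, and taking for `D` the graphs in `C` with exactly `k₁`
components isomorphic to `H₁` gives the joint limit. The required stability of `D` holds when `H`
lies in the class; otherwise `H` is never a component.
-/

section Components

open SimpleGraph

variable {V W U : Type*} {G : SimpleGraph V} {K : SimpleGraph W} {H : SimpleGraph U}

lemma map_connectedComponentMk_eq_of_reachable {v w : V ⊕ W} (h : (G ⊕g K).Reachable v w) :
    v.map G.connectedComponentMk K.connectedComponentMk =
      w.map G.connectedComponentMk K.connectedComponentMk := by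
  obtain ⟨p⟩ := h
  induction p with
  | nil => rfl
  | @cons u v _ huv _ ih =>
    rw [← ih]
    rcases u with u | u <;> rcases v with v | v
    · exact congrArg Sum.inl (ConnectedComponent.sound (sum_adj_inl.1 huv).reachable)
    · cases not_adj_sum_inl_inr u v huv
    · cases not_adj_sum_inl_inr v u huv.symm
    · exact congrArg Sum.inr (ConnectedComponent.sound (sum_adj_inr.1 huv).reachable)

/-- The connected components of a disjoint union of two graphs, as the disjoint union of the
connected components of the two graphs. -/
def sumConnectedComponentEquiv (G : SimpleGraph V) (K : SimpleGraph W) :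
    (G ⊕g K).ConnectedComponent ≃ G.ConnectedComponent ⊕ K.ConnectedComponent where
  toFun := ConnectedComponent.lift (Sum.map G.connectedComponentMk K.connectedComponentMk)
    fun _ _ p _ => map_connectedComponentMk_eq_of_reachable p.reachable
  invFun := Sum.elim (·.map Embedding.sumInl.toHom) (·.map Embedding.sumInr.toHom)
  left_inv := ConnectedComponent.ind (by rintro (v | v) <;> rfl)
  right_inv := by rintro (c | c) <;> exact c.ind fun _ => rfl

lemma supp_sumConnectedComponentEquiv_symm_inl (c : G.ConnectedComponent) :
    ((sumConnectedComponentEquiv G K).symm (.inl c)).supp = Sum.inl '' c.supp := by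
  ext v
  rw [ConnectedComponent.mem_supp_iff, Equiv.eq_symm_apply]
  rcases v with v | v <;> simp [sumConnectedComponentEquiv]

lemma supp_sumConnectedComponentEquiv_symm_inr (c : K.ConnectedComponent) :
    ((sumConnectedComponentEquiv G K).symm (.inr c)).supp = Sum.inr '' c.supp := by
  ext v
  rw [ConnectedComponent.mem_supp_iff, Equiv.eq_symm_apply]
  rcases v with v | v <;> simp [sumConnectedComponentEquiv]

lemma nonempty_iso_congr_left (e : G ≃g K) : Nonempty (G ≃g H) ↔ Nonempty (K ≃g H) :=
  ⟨fun ⟨f⟩ => ⟨e.symm.trans f⟩, fun ⟨f⟩ => ⟨e.trans f⟩⟩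

lemma nonempty_induce_iso_induce_image (f : G ↪g K) (s : Set V) :
    Nonempty (G.induce s ≃g K.induce (f '' s)) := by
  have h : Set.range (f.comp (Embedding.induce s)) = f '' s := by
    rw [Embedding.coe_comp, Set.range_comp]
    exact congrArg _ Subtype.range_coe
  exact h ▸ ⟨(f.comp (Embedding.induce s)).isoInduceRange⟩

lemma nonempty_induce_supp_inl_iso (c : G.ConnectedComponent) :
    Nonempty (G.induce c.supp ≃g
      (G ⊕g K).induce ((sumConnectedComponentEquiv G K).symm (.inl c)).supp) := by
  rw [supp_sumConnectedComponentEquiv_symm_inl]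
  exact nonempty_induce_iso_induce_image Embedding.sumInl c.supp

lemma nonempty_induce_supp_inr_iso (c : K.ConnectedComponent) :
    Nonempty (K.induce c.supp ≃g
      (G ⊕g K).induce ((sumConnectedComponentEquiv G K).symm (.inr c)).supp) := by
  rw [supp_sumConnectedComponentEquiv_symm_inr]
  exact nonempty_induce_iso_induce_image Embedding.sumInr c.supp

lemma supp_connectedComponentEquiv (e : G ≃g K) (c : G.ConnectedComponent) :
    (e.connectedComponentEquiv c).supp = e '' c.supp := by
  ext w
  obtain ⟨v, rfl⟩ := e.surjective w
  rw [e.injective.mem_set_image]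
  exact ConnectedComponent.iso_image_comp_eq_map_iff_eq_comp

lemma supp_eq_univ_of_connected (hG : G.Connected) (c : G.ConnectedComponent) :
    c.supp = Set.univ :=
  have := hG.preconnected.subsingleton_connectedComponent
  Set.eq_univ_of_forall fun _ => Subsingleton.elim _ _

end Components

section NumComponents

open SimpleGraph

variable {V W U : Type} {G : SimpleGraph V} {K : SimpleGraph W} {H : SimpleGraph U}

lemma numComponentsIso_congr (e : G ≃g K) : numComponentsIso G H = numComponentsIso K H := by
  refine Nat.card_congr (e.connectedComponentEquiv.subtypeEquiv fun c => ?_)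
  obtain ⟨f⟩ := nonempty_induce_iso_induce_image e.toEmbedding c.supp
  rw [supp_connectedComponentEquiv]
  exact nonempty_iso_congr_left f

lemma numComponentsIso_sum [Finite V] [Finite W] (G : SimpleGraph V) (K : SimpleGraph W)
    (H : SimpleGraph U) :
    numComponentsIso (G ⊕g K) H = numComponentsIso G H + numComponentsIso K H := by
  unfold numComponentsIso
  rw [← Nat.card_sum]
  refine Nat.card_congr ((sumConnectedComponentEquiv G K).symm.subtypeEquivOfSubtype.symm.trans
    (Equiv.subtypeSum.trans (.sumCongr ?_ ?_)))
  · exact .subtypeEquivRight fun c =>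
      (nonempty_iso_congr_left (nonempty_induce_supp_inl_iso c).some).symm
  · exact .subtypeEquivRight fun c =>
      (nonempty_iso_congr_left (nonempty_induce_supp_inr_iso c).some).symm

lemma numComponentsIso_le_card [Finite V] : numComponentsIso G H ≤ Nat.card V :=
  (Nat.card_le_card_of_injective _ Subtype.val_injective).trans
    (Nat.card_le_card_of_surjective _ Quot.mk_surjective)

lemma card_le_card_of_numComponentsIso_ne_zero [Finite V] (h : numComponentsIso G H ≠ 0) :
    Nat.card U ≤ Nat.card V := by
  obtain ⟨⟨c, ⟨e⟩⟩⟩ := (Nat.card_ne_zero.1 h).1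
  rw [← Nat.card_congr e.toEquiv]
  exact Nat.card_le_card_of_injective _ Subtype.val_injective

lemma numComponentsIso_of_iso (hG : G.Connected) (e : G ≃g H) : numComponentsIso G H = 1 := by
  obtain ⟨v⟩ := hG.nonempty
  have := hG.preconnected.subsingleton_connectedComponent
  refine Nat.card_eq_one_iff_unique.2 ⟨inferInstance, ⟨G.connectedComponentMk v, ?_⟩⟩
  rw [supp_eq_univ_of_connected hG]
  exact ⟨(induceUnivIso G).trans e⟩

lemma numComponentsIso_of_not_iso (hG : G.Connected) (h : ¬Nonempty (G ≃g H)) :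
    numComponentsIso G H = 0 := by
  refine Nat.card_eq_zero.2 (.inl ⟨fun ⟨c, hc⟩ => h ?_⟩)
  rw [supp_eq_univ_of_connected hG] at hc
  exact (nonempty_iso_congr_left (induceUnivIso G)).1 hc

end NumComponents

section Counting

open SimpleGraph

lemma card_mul_eq_card_mul_of_relation {α β : Type*} [Finite α] [Finite β] (r : α → β → Prop)
    {m n : ℕ} (hm : ∀ a, Nat.card {b // r a b} = m) (hn : ∀ b, Nat.card {a // r a b} = n) :
    Nat.card α * m = Nat.card β * n := by
  classical
  cases nonempty_fintype α
  cases nonempty_fintype β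
  simp only [Nat.card_eq_fintype_card, Fintype.card_subtype] at hm hn ⊢
  exact Finset.card_mul_eq_card_mul r (fun a _ => hm a) fun b _ => hn b

lemma card_equiv_of_card_eq {α β : Type*} [Finite α] [Finite β] (h : Nat.card α = Nat.card β) :
    Nat.card (α ≃ β) = (Nat.card α).factorial := by
  obtain ⟨e⟩ := Finite.card_eq.1 h
  rw [Nat.card_congr (Equiv.equivCongr (.refl α) e.symm), Nat.card_perm]

variable {U V W : Type} {H : SimpleGraph U} {G : SimpleGraph V}

/-- The graph `G` is the disjoint union of a copy of `H` and another graph, where the bijection `e`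
tells which vertices make up the copy and labels the vertices of both parts. -/
def SplitsAlong (e : U ⊕ W ≃ V) (H : SimpleGraph U) (G : SimpleGraph V) : Prop :=
  ∃ B : SimpleGraph W, G.comap e = H ⊕g B

lemma sum_right_injective (H : SimpleGraph U) :
    Function.Injective fun B : SimpleGraph W => H ⊕g B := fun B B' h => by
  ext v w
  simpa using congrArg (fun K => K.Adj (.inr v) (.inr w)) h

lemma splitsAlong_of_component (c : G.ConnectedComponent) [DecidablePred (· ∈ c.supp)]
    (f : H ≃g G.induce c.supp) (g : W ≃ ↥c.suppᶜ) :
    SplitsAlong ((f.toEquiv.sumCongr g).trans (Equiv.Set.sumCompl c.supp)) H G := by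
  refine ⟨(G.comap fun w => (g w : V)), ?_⟩
  have hcross (u : U) (w : W) : ¬G.Adj (f u) (g w) := fun h =>
    (g w).2 ((c.mem_supp_congr_adj h).1 (f u).2)
  ext (u | w) (u' | w')
  · simpa using f.map_adj_iff
  · simpa using hcross u w'
  · simpa [G.adj_comm] using hcross u' w
  · simp

lemma exists_component_of_splitsAlong (hH : H.Connected) {e : U ⊕ W ≃ V} (h : SplitsAlong e H G) :
    ∃ c : G.ConnectedComponent, ∃ f : H ≃g G.induce c.supp, ∃ g : W ≃ ↥c.suppᶜ,
      (∀ u, (f u : V) = e (.inl u)) ∧ ∀ w, (g w : V) = e (.inr w) := by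
  obtain ⟨B, hB⟩ := h
  let E : H ⊕g B ≃g G := ⟨e, fun {v w} => by rw [← hB]; rfl⟩
  obtain ⟨u⟩ := hH.nonempty
  let c := E.connectedComponentEquiv
    ((sumConnectedComponentEquiv H B).symm (.inl (H.connectedComponentMk u)))
  have hc : c.supp = e '' Set.range Sum.inl := by
    rw [supp_connectedComponentEquiv, supp_sumConnectedComponentEquiv_symm_inl,
      supp_eq_univ_of_connected hH, Set.image_univ]
    rfl
  refine ⟨c, Embedding.sumInl.isoInduceRange.trans (E.induce ?_),
    (Equiv.ofInjective Sum.inr Sum.inr_injective).trans (e.subtypeEquiv fun v => ?_),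
    fun _ => rfl, fun _ => rfl⟩
  · rw [hc]
    exact e.injective.injOn.bijOn_image
  · rw [hc, Set.mem_compl_iff, e.injective.mem_set_image, ← Set.compl_range_inl,
      Set.mem_compl_iff]

open Classical in
/-- The ways to split off a component of `G` isomorphic to `H`, given by a choice of the component
and of labellings of its vertices by `U` and of the remaining vertices by `W`. -/
noncomputable def splittingOfComponent (H : SimpleGraph U) (G : SimpleGraph V) (W : Type)
    (p : Σ c : {c : G.ConnectedComponent // Nonempty (G.induce c.supp ≃g H)},
      (H ≃g G.induce c.1.supp) × (W ≃ ↥c.1.suppᶜ)) :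
    {e : U ⊕ W ≃ V // SplitsAlong e H G} :=
  ⟨_, splitsAlong_of_component p.1.1 p.2.1 p.2.2⟩

lemma splittingOfComponent_injective (hH : H.Connected) :
    Function.Injective (splittingOfComponent H G W) := by
  rintro ⟨⟨c, hc⟩, f, g⟩ ⟨⟨c', hc'⟩, f', g'⟩ h
  have happly (v : U ⊕ W) := DFunLike.congr_fun (congrArg Subtype.val h) v
  have hf (u : U) : (f u : V) = f' u := happly (.inl u)
  have hg (w : W) : (g w : V) = g' w := happly (.inr w)
  obtain ⟨u⟩ := hH.nonempty
  obtain rfl : c = c' := (f u).2.symm.trans ((congrArg _ (hf u)).trans (f' u).2)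
  obtain rfl : f = f' := RelIso.ext fun u => Subtype.ext (hf u)
  obtain rfl : g = g' := Equiv.ext fun w => Subtype.ext (hg w)
  rfl

lemma splittingOfComponent_surjective (hH : H.Connected) :
    Function.Surjective (splittingOfComponent H G W) := by
  rintro ⟨e, he⟩
  obtain ⟨c, f, g, hf, hg⟩ := exists_component_of_splitsAlong hH he
  refine ⟨⟨⟨c, ⟨f.symm⟩⟩, f, g⟩, Subtype.ext (Equiv.ext ?_)⟩
  rintro (u | w)
  exacts [hf u, hg w]

lemma card_iso_eq_of_iso (e : G ≃g H) : Nat.card (H ≃g G) = Nat.card (H ≃g H) :=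
  Nat.card_congr ⟨(·.trans e), (·.trans e.symm), fun f => by ext; simp, fun f => by ext; simp⟩

lemma card_splitsAlong [Finite U] [Finite W] [Finite V] (hH : H.Connected)
    (hV : Nat.card V = Nat.card W + Nat.card U) :
    Nat.card {e : U ⊕ W ≃ V // SplitsAlong e H G} =
      numComponentsIso G H * (Nat.card (H ≃g H) * (Nat.card W).factorial) := by
  have (c : G.ConnectedComponent) : Finite (H ≃g G.induce c.supp) := DFunLike.finite _
  cases nonempty_fintype {c : G.ConnectedComponent // Nonempty (G.induce c.supp ≃g H)}
  rw [← Nat.card_congr (.ofBijective _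
    ⟨splittingOfComponent_injective hH, splittingOfComponent_surjective hH⟩), Nat.card_sigma,
    Finset.sum_eq_card_nsmul fun c _ => ?_, Finset.card_univ, ← Nat.card_eq_fintype_card,
    smul_eq_mul, numComponentsIso]
  obtain ⟨e⟩ := c.2
  have hcompl : Nat.card W = Nat.card ↥c.1.suppᶜ := by
    have hsum := Set.ncard_add_ncard_compl c.1.supp
    have hU : c.1.supp.ncard = Nat.card U := Nat.card_congr e.toEquiv
    rw [Nat.card_coe_set_eq]
    lia
  rw [Nat.card_prod, card_iso_eq_of_iso e, card_equiv_of_card_eq hcompl]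

end Counting

section Classes

open SimpleGraph

variable {U : Type} {H : SimpleGraph U} {C D : GraphClassOn}

namespace GraphClassOn

/-- The graphs in `C` with exactly `k` components isomorphic to `H`. -/
def withComponents (C : GraphClassOn) {U : Type} (H : SimpleGraph U) (k : ℕ) : GraphClassOn :=
  fun _ _ G => C _ G ∧ numComponentsIso G H = k

/-- Adding or removing a disjoint copy of `H` does not affect membership in `C`. -/
def SumInvariant (C : GraphClassOn) {U : Type} [Finite U] (H : SimpleGraph U) : Prop :=
  ∀ (W : Type) [Finite W] (B : SimpleGraph W), C (U ⊕ W) (H ⊕g B) ↔ C W B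

lemma isoInvariant_withComponents (hD : ClassIsoInvariant D) (H : SimpleGraph U) (k : ℕ) :
    ClassIsoInvariant (D.withComponents H k) := fun V W _ _ G K ⟨e⟩ => by
  rw [withComponents, withComponents, hD V W G K ⟨e⟩, numComponentsIso_congr e]

lemma SumInvariant.withComponents_of_not_iso [Finite U] {U' : Type} {H' : SimpleGraph U'}
    (hD : D.SumInvariant H) (hH : H.Connected) (hHH' : ¬Nonempty (H ≃g H')) (k : ℕ) :
    (D.withComponents H' k).SumInvariant H := fun W _ B => by
  rw [withComponents, withComponents, hD W B, numComponentsIso_sum,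
    numComponentsIso_of_not_iso hH hHH', zero_add]

lemma SumInvariant.withComponents_succ_iff [Finite U] (hD : D.SumInvariant H) (hH : H.Connected)
    (k : ℕ) {W : Type} [Finite W] (B : SimpleGraph W) :
    D.withComponents H (k + 1) (U ⊕ W) (H ⊕g B) ↔ D.withComponents H k W B := by
  rw [withComponents, withComponents, hD W B, numComponentsIso_sum,
    numComponentsIso_of_iso hH .refl, add_comm 1, Nat.add_right_cancel_iff]

end GraphClassOn

lemma ClassDecomposable.sum_iff (hC : ClassDecomposable C) (hIso : ClassIsoInvariant C)
    {V W : Type} [Finite V] [Finite W] (G : SimpleGraph V) (K : SimpleGraph W) :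
    C (V ⊕ W) (G ⊕g K) ↔ C V G ∧ C W K := by
  rw [hC (V ⊕ W), hC V, hC W, (sumConnectedComponentEquiv G K).symm.surjective.forall, Sum.forall]
  exact and_congr
    (forall_congr' fun c => (hIso _ _ _ _ (nonempty_induce_supp_inl_iso c)).symm)
    (forall_congr' fun c => (hIso _ _ _ _ (nonempty_induce_supp_inr_iso c)).symm)

lemma ClassDecomposable.sumInvariant [Finite U] (hC : ClassDecomposable C)
    (hIso : ClassIsoInvariant C) (hH : C U H) : C.SumInvariant H := fun _ _ B =>
  (hC.sum_iff hIso H B).trans (and_iff_right hH)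

lemma ClassDecomposable.numComponentsIso_eq_zero [Finite U] (hC : ClassDecomposable C)
    (hIso : ClassIsoInvariant C) (hH : ¬C U H) {V : Type} [Finite V] {G : SimpleGraph V}
    (hG : C V G) : numComponentsIso G H = 0 :=
  Nat.card_eq_zero.2 (.inl ⟨fun c => hH ((hIso _ _ _ _ c.2).1 ((hC V G).1 hG c))⟩)

lemma classCount_pos_iff {n : ℕ} : 0 < classCount C n ↔ ∃ G, C (Fin n) G :=
  Nat.card_pos_iff.trans ((and_iff_left Subtype.finite).trans nonempty_subtype)

lemma ClassDecomposable.classCount_zero_pos (hC : ClassDecomposable C) :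
    0 < classCount C 0 :=
  classCount_pos_iff.2 ⟨⊥, (hC _ _).2 fun c => c.ind fun v => v.elim0⟩

lemma classCount_mono (hDC : ∀ (V : Type) [Finite V] (G : SimpleGraph V), D V G → C V G) (n : ℕ) :
    classCount D n ≤ classCount C n :=
  Nat.card_le_card_of_injective _ (Subtype.impEmbedding _ _ fun G => hDC _ G).injective

lemma ClassIsoInvariant.card_splitsAlong {V W : Type} [Finite U] [Finite V] [Finite W]
    (hD : ClassIsoInvariant D) (H : SimpleGraph U) (e : U ⊕ W ≃ V) :
    Nat.card {G : {G : SimpleGraph V // D V G} // SplitsAlong e H G.1} =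
      Nat.card {B : SimpleGraph W // D (U ⊕ W) (H ⊕g B)} := by
  have hmem (B : SimpleGraph W) : D V ((H ⊕g B).comap e.symm) ↔ D (U ⊕ W) (H ⊕g B) :=
    hD _ _ _ _ ⟨Iso.comap e.symm (H ⊕g B)⟩
  have hsplit (B : SimpleGraph W) : ((H ⊕g B).comap e.symm).comap e = H ⊕g B := by
    simp [SimpleGraph.comap_comap]
  refine (Nat.card_congr (.ofBijective
    (fun B => ⟨⟨(H ⊕g B.1).comap e.symm, (hmem B).2 B.2⟩, B.1, hsplit B⟩) ⟨?_, ?_⟩)).symm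
  · intro B B' h
    have hcomap := congrArg (SimpleGraph.comap e ·.1.1) h
    simp only [hsplit] at hcomap
    exact Subtype.ext (sum_right_injective H hcomap)
  · rintro ⟨⟨G, hG⟩, B, hB⟩
    have hGB : (H ⊕g B).comap e.symm = G := by simp [← hB, SimpleGraph.comap_comap]
    exact ⟨⟨B, (hmem B).1 (hGB ▸ hG)⟩, Subtype.ext (Subtype.ext hGB)⟩

lemma factorial_mul_classCount_withComponents [Finite U] (hIso : ClassIsoInvariant D)
    (hH : H.Connected) (hD : D.SumInvariant H) (n k : ℕ) :
    (n + Nat.card U).factorial * classCount (D.withComponents H k) n =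
      classCount (D.withComponents H (k + 1)) (n + Nat.card U) *
        ((k + 1) * (Nat.card (H ≃g H) * n.factorial)) := by
  have hcard : Nat.card (Fin (n + Nat.card U)) = Nat.card (Fin n) + Nat.card U := by simp
  have hequiv : Nat.card (U ⊕ Fin n ≃ Fin (n + Nat.card U)) = (n + Nat.card U).factorial := by
    rw [card_equiv_of_card_eq (by simp [add_comm])]
    simp [add_comm]
  rw [← hequiv]
  refine card_mul_eq_card_mul_of_relation
    (fun e (G : {G // D.withComponents H (k + 1) _ G}) => SplitsAlong e H G.1)
    (fun e => ?_) fun G => ?_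
  · rw [(GraphClassOn.isoInvariant_withComponents hIso H (k + 1)).card_splitsAlong H e]
    simp only [hD.withComponents_succ_iff hH]
    rfl
  · rw [card_splitsAlong hH hcard, G.2.2, Nat.card_fin]

lemma classCount_withComponents_succ_eq_zero (D : GraphClassOn) (H : SimpleGraph U) {n : ℕ}
    (hn : n < Nat.card U) (k : ℕ) : classCount (D.withComponents H (k + 1)) n = 0 := by
  refine Nat.card_eq_zero.2 (.inl ⟨fun G => hn.not_ge ?_⟩)
  rw [← Nat.card_fin n]
  exact card_le_card_of_numComponentsIso_ne_zero (ne_of_eq_of_ne G.2.2 k.succ_ne_zero)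

lemma classCount_withComponents_of_forall_eq_zero {n : ℕ}
    (h : ∀ G, D (Fin n) G → numComponentsIso G H = 0) (k : ℕ) :
    classCount (D.withComponents H k) n = if k = 0 then classCount D n else 0 := by
  split_ifs with hk
  · exact Nat.card_congr (Equiv.subtypeEquivRight fun G =>
      and_iff_left_of_imp fun hG => (h G hG).trans hk.symm)
  · exact Nat.card_eq_zero.2 (.inl ⟨fun G => hk (G.2.2.symm.trans (h G.1 G.2.1))⟩)

lemma classCount_eq_sum_withComponents (D : GraphClassOn) (H : SimpleGraph U) (n : ℕ) :
    classCount D n = ∑ k ∈ Finset.range (n + 1), classCount (D.withComponents H k) n := by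
  classical
  simp only [classCount, GraphClassOn.withComponents, Nat.card_eq_fintype_card,
    Fintype.card_subtype]
  rw [Finset.card_eq_sum_card_fiberwise (f := (numComponentsIso · H))
    (t := Finset.range (n + 1)) fun G _ => ?_]
  · simp only [Finset.filter_filter]
  · simpa [Nat.lt_succ_iff] using numComponentsIso_le_card (G := G) (H := H)

end Classes

section Analysis

open PowerSeries Finset

lemma tendsto_shift_div {a : ℕ → ℝ} {γ : ℝ} (ha : ∀ n, a n ≠ 0)
    (hγ : Tendsto (fun n => a (n + 1) / a n) atTop (𝓝 γ)) (d : ℕ) :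
    Tendsto (fun n => a (n + d) / a n) atTop (𝓝 (γ ^ d)) := by
  induction d with
  | zero => simp [div_self (ha _)]
  | succ d ih =>
    rw [pow_succ']
    refine ((hγ.comp (tendsto_add_atTop_nat d)).mul ih).congr fun n => ?_
    exact div_mul_div_cancel₀ (ha (n + d))

lemma abs_div_shift_le {a : ℕ → ℝ} {M : ℝ} (ha : ∀ n, a n ≠ 0)
    (hM : ∀ n, |a n / a (n + 1)| ≤ M) (n d : ℕ) : |a n / a (n + d)| ≤ M ^ d := by
  induction d with
  | zero => simp [div_self (ha _)]
  | succ d ih =>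
    rw [← div_mul_div_cancel₀ (ha (n + d)), abs_mul, pow_succ]
    exact mul_le_mul ih (hM (n + d)) (abs_nonneg _) ((abs_nonneg _).trans ih)

/-- Schur's lemma, in the case of an entire factor `F`. -/
theorem tendsto_coeff_mul_div {F G : ℝ⟦X⟧} {a : ℕ → ℝ} {γ p : ℝ} (ha : ∀ n, a n ≠ 0)
    (hγ : γ ≠ 0) (haγ : Tendsto (fun n => a (n + 1) / a n) atTop (𝓝 γ))
    (hF : ∀ x : ℝ, Summable fun j => coeff j F * x ^ j)
    (hG : Tendsto (fun n => coeff n G / a n) atTop (𝓝 p)) :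
    Tendsto (fun n => coeff n (F * G) / a n) atTop
      (𝓝 ((∑' j, coeff j F * γ⁻¹ ^ j) * p)) := by
  have hinv (d : ℕ) : Tendsto (fun n => a n / a (n + d)) atTop (𝓝 (γ⁻¹ ^ d)) := by
    simpa using (tendsto_shift_div ha haγ d).inv₀ (pow_ne_zero d hγ)
  obtain ⟨M, hM⟩ := (Metric.isBounded_range_of_tendsto _ (hinv 1)).exists_norm_le
  obtain ⟨K, hK⟩ := (Metric.isBounded_range_of_tendsto _ hG).exists_norm_le
  simp only [Set.forall_mem_range, Real.norm_eq_abs] at hM hK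
  let f (n j : ℕ) : ℝ := if j ≤ n then coeff j F * (coeff (n - j) G / a n) else 0
  have hsplit (m j : ℕ) :
      coeff m G / a (m + j) = a m / a (m + j) * (coeff m G / a m) := by
    rw [mul_comm, div_mul_div_cancel₀ (ha m)]
  have hf (n : ℕ) : coeff n (F * G) / a n = ∑' j, f n j := by
    rw [tsum_eq_sum (s := range (n + 1)) fun j hj => if_neg (by simpa using hj), coeff_mul,
      Nat.sum_antidiagonal_eq_sum_range_succ fun i j => coeff i F * coeff j G, sum_div]
    exact sum_congr rfl fun j hj => by
      rw [if_pos (mem_range_succ_iff.1 hj), mul_div_assoc]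
  simp_rw [hf, ← tsum_mul_right, mul_assoc]
  refine tendsto_tsum_of_dominated_convergence ((hF M).norm.mul_right K) (fun j => ?_)
    (.of_forall fun n j => ?_)
  · rw [← tendsto_add_atTop_iff_nat j]
    refine (((hinv j).mul hG).const_mul (coeff j F)).congr fun n => ?_
    simp only [f, le_add_iff_nonneg_left, zero_le, if_true, Nat.add_sub_cancel, hsplit]
  · by_cases hj : j ≤ n
    · obtain ⟨m, rfl⟩ := Nat.exists_eq_add_of_le' hj
      simp only [f, if_pos hj, Nat.add_sub_cancel, hsplit, norm_mul, norm_pow, Real.norm_eq_abs,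
        mul_assoc]
      gcongr
      · exact (abs_div_shift_le ha hM m j).trans
          (pow_le_pow_left₀ ((abs_nonneg _).trans (hM 0)) (le_abs_self M) j)
      · exact hK m
    · have := (abs_nonneg _).trans (hK 0)
      simp only [f, if_neg hj, norm_zero]
      positivity

lemma hasSum_coeff_rescale_exp (t x : ℝ) :
    HasSum (fun j => coeff j (rescale t (exp ℝ)) * x ^ j) (Real.exp (t * x)) := by
  rw [Real.exp_eq_exp_ℝ]
  refine (NormedSpace.expSeries_div_hasSum_exp (t * x)).congr_fun fun j => ?_
  simp [mul_pow, div_eq_mul_inv, mul_right_comm]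

lemma hasSum_coeff_expand {φ : ℝ⟦X⟧} {h : ℕ} (hh : h ≠ 0) {x s : ℝ}
    (hφ : HasSum (fun j => coeff j φ * (x ^ h) ^ j) s) :
    HasSum (fun j => coeff j (expand h hh φ) * x ^ j) s := by
  rw [← (mul_right_injective₀ hh).hasSum_iff]
  · simpa [Function.comp_def, coeff_expand_mul, pow_mul] using hφ
  · intro j hj
    rw [coeff_expand_of_not_dvd, zero_mul]
    rintro ⟨i, rfl⟩
    exact hj ⟨i, rfl⟩

lemma coeff_expand_mul_eq_sum {R : Type*} [CommRing R] {h : ℕ} (hh : h ≠ 0) (φ ψ : R⟦X⟧) (n : ℕ) :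
    coeff n (expand h hh φ * ψ) =
      ∑ k ∈ range (n + 1), coeff n (monomial (h * k) (coeff k φ) * ψ) := by
  simp only [coeff_mul, coeff_monomial]
  rw [sum_comm]
  refine sum_congr rfl fun ij hij => ?_
  rw [← sum_mul]
  congr 1
  by_cases hd : h ∣ ij.1
  · obtain ⟨m, hm⟩ := hd
    have : m ≤ n := calc
      m ≤ ij.1 := hm ▸ Nat.le_mul_of_pos_left m (pos_of_ne_zero hh)
      _ ≤ n := le_of_le_of_eq (Nat.le_add_right _ _) (mem_antidiagonal.1 hij)
    simp only [hm, coeff_expand_mul, mul_right_inj' hh]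
    simp [this]
  · rw [coeff_expand_of_not_dvd _ _ _ hd, sum_eq_zero]
    rintro k -
    exact if_neg fun hk => hd ⟨k, hk⟩

lemma expand_rescale_exp_mul_neg {h : ℕ} (hh : h ≠ 0) (t : ℝ) :
    expand h hh (rescale (-t) (exp ℝ)) * expand h hh (rescale t (exp ℝ)) = 1 := by
  rw [← map_mul, exp_mul_exp_eq_exp_add, neg_add_cancel]
  simp

end Analysis

section GeneratingFunctions

open Finset PowerSeries SimpleGraph

variable {U : Type} [Finite U] {H : SimpleGraph U} {C D : GraphClassOn}

namespace GraphClassOn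

/-- The exponential generating function of `C`. -/
noncomputable def egf (C : GraphClassOn) : ℝ⟦X⟧ :=
  .mk fun n => classCount C n / n.factorial

lemma coeff_egf_div_coeff_egf (D C : GraphClassOn) (n : ℕ) :
    coeff n D.egf / coeff n C.egf = (classCount D n / classCount C n : ℝ) := by
  simp only [egf, coeff_mk]
  exact div_div_div_cancel_right₀ (by positivity) _ _

lemma coeff_egf_succ_div_coeff_egf (C : GraphClassOn) (n : ℕ) :
    coeff (n + 1) C.egf / coeff n C.egf =
      (classCount C (n + 1) / ((n + 1 : ℕ) * classCount C n) : ℝ) := by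
  simp only [egf, coeff_mk, Nat.factorial_succ, Nat.cast_mul]
  rw [← div_div, div_div_div_cancel_right₀ (by positivity), div_div]

lemma egf_withComponents_succ (hIso : ClassIsoInvariant D) (hH : H.Connected)
    (hD : D.SumInvariant H) (k : ℕ) :
    (D.withComponents H (k + 1)).egf =
      monomial (Nat.card U) ((Nat.card (H ≃g H) : ℝ)⁻¹ / (k + 1)) *
        (D.withComponents H k).egf := by
  have : Finite (H ≃g H) := DFunLike.finite _
  have hAut : (Nat.card (H ≃g H) : ℝ) ≠ 0 := Nat.cast_ne_zero.2 Nat.card_pos.ne'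
  ext n
  rw [monomial_eq_C_mul_X_pow, mul_assoc, coeff_C_mul, coeff_X_pow_mul']
  split_ifs with hn
  · obtain ⟨m, rfl⟩ := Nat.exists_eq_add_of_le' hn
    have hcount := congrArg (Nat.cast (R := ℝ))
      (factorial_mul_classCount_withComponents hIso hH hD m k)
    push_cast at hcount
    simp only [egf, coeff_mk, Nat.add_sub_cancel]
    field_simp
    linarith
  · simp [egf, classCount_withComponents_succ_eq_zero D H (not_le.1 hn)]

lemma egf_withComponents (hIso : ClassIsoInvariant D) (hH : H.Connected)
    (hD : D.SumInvariant H) (k : ℕ) :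
    (D.withComponents H k).egf =
      monomial (Nat.card U * k) (coeff k (rescale (Nat.card (H ≃g H) : ℝ)⁻¹ (exp ℝ))) *
        (D.withComponents H 0).egf := by
  induction k with
  | zero => simp
  | succ k ih =>
    rw [egf_withComponents_succ hIso hH hD, ih, ← mul_assoc, monomial_mul_monomial]
    congr 2
    · rw [mul_add_one, add_comm]
    · simp only [coeff_rescale, coeff_exp, Nat.factorial_succ, one_div, map_inv₀, map_natCast,
        pow_succ]
      push_cast
      field_simp

lemma egf_eq_expand_mul (hIso : ClassIsoInvariant D) (hH : H.Connected)
    (hD : D.SumInvariant H) (hU : Nat.card U ≠ 0) :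
    D.egf = expand (Nat.card U) hU (rescale (Nat.card (H ≃g H) : ℝ)⁻¹ (exp ℝ)) *
      (D.withComponents H 0).egf := by
  ext n
  rw [coeff_expand_mul_eq_sum]
  simp_rw [← egf_withComponents hIso hH hD]
  simp only [egf, coeff_mk, classCount_eq_sum_withComponents D H n, Nat.cast_sum, sum_div]

lemma egf_withComponents_eq_mul_egf (hIso : ClassIsoInvariant D) (hH : H.Connected)
    (hD : D.SumInvariant H) (hU : Nat.card U ≠ 0) (k : ℕ) :
    (D.withComponents H k).egf =
      monomial (Nat.card U * k) (coeff k (rescale (Nat.card (H ≃g H) : ℝ)⁻¹ (exp ℝ))) *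
        (expand (Nat.card U) hU (rescale (-(Nat.card (H ≃g H) : ℝ)⁻¹) (exp ℝ)) * D.egf) := by
  conv_rhs => rw [egf_eq_expand_mul hIso hH hD hU]
  rw [← mul_assoc (expand _ _ _), expand_rescale_exp_mul_neg, one_mul,
    egf_withComponents hIso hH hD]

end GraphClassOn

end GeneratingFunctions

section Limits

open Finset PowerSeries SimpleGraph

variable {U : Type} [Finite U] {H : SimpleGraph U} {C D : GraphClassOn} {γ p : ℝ}

lemma tendsto_coeff_egf_succ_div (hγ : Tendsto (fun n : ℕ =>
      (classCount C n : ℝ) / (n * classCount C (n - 1))) atTop (𝓝 γ)) :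
    Tendsto (fun n => coeff (n + 1) C.egf / coeff n C.egf) atTop (𝓝 γ) :=
  ((tendsto_add_atTop_iff_nat 1).2 hγ).congr fun n => (C.coeff_egf_succ_div_coeff_egf n).symm

lemma coeff_egf_pos (hpos : ∀ n, 0 < classCount C n) (n : ℕ) : 0 < coeff n C.egf := by
  have := hpos n
  simp only [GraphClassOn.egf, coeff_mk]
  positivity

lemma tendsto_coeff_monomial_mul_div {G : ℝ⟦X⟧} {a : ℕ → ℝ} (ha : ∀ n, a n ≠ 0)
    (hγ : γ ≠ 0) (haγ : Tendsto (fun n => a (n + 1) / a n) atTop (𝓝 γ))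
    (hG : Tendsto (fun n => coeff n G / a n) atTop (𝓝 p)) (d : ℕ) (c : ℝ) :
    Tendsto (fun n => coeff n (monomial d c * G) / a n) atTop (𝓝 (c * γ⁻¹ ^ d * p)) := by
  have hsum (x : ℝ) : HasSum (fun j => coeff j (monomial d c) * x ^ j) (c * x ^ d) := by
    convert hasSum_single d fun j hj => ?_ using 1
    · simp
    · simp [coeff_monomial, hj]
  rw [← (hsum _).tsum_eq]
  exact tendsto_coeff_mul_div ha hγ haγ (fun x => (hsum x).summable) hG

/-- The parameter of the limiting Poisson law of the number of components isomorphic to `H`, where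
`γ` is the limit of `c_n / (n * c_{n-1})`. -/
noncomputable def poissonRate (H : SimpleGraph U) (γ : ℝ) : ℝ :=
  (Nat.card (H ≃g H) : ℝ)⁻¹ * γ⁻¹ ^ Nat.card U

lemma tendsto_classCount_withComponents_of_ne_zero (hpos : ∀ n, 0 < classCount C n)
    (hγ : γ ≠ 0)
    (hC : Tendsto (fun n => coeff (n + 1) C.egf / coeff n C.egf) atTop (𝓝 γ))
    (hIso : ClassIsoInvariant D) (hH : H.Connected) (hD : D.SumInvariant H)
    (hp : Tendsto (fun n => (classCount D n / classCount C n : ℝ)) atTop (𝓝 p)) (k : ℕ) :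
    Tendsto (fun n => (classCount (D.withComponents H k) n / classCount C n : ℝ)) atTop
      (𝓝 (p * (Real.exp (-poissonRate H γ) * poissonRate H γ ^ k / k.factorial))) := by
  have := hH.nonempty
  have hU : Nat.card U ≠ 0 := Nat.card_pos.ne'
  have ha (n : ℕ) := (coeff_egf_pos hpos n).ne'
  have hexp (x : ℝ) := hasSum_coeff_expand hU
    (hasSum_coeff_rescale_exp (-(Nat.card (H ≃g H) : ℝ)⁻¹) (x ^ Nat.card U))
  simp only [← GraphClassOn.coeff_egf_div_coeff_egf,
    GraphClassOn.egf_withComponents_eq_mul_egf hIso hH hD hU] at hp ⊢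
  convert tendsto_coeff_monomial_mul_div ha hγ hC
    (tendsto_coeff_mul_div ha hγ hC (fun x => (hexp x).summable) hp) (Nat.card U * k)
    (coeff k (rescale (Nat.card (H ≃g H) : ℝ)⁻¹ (exp ℝ))) using 2
  rw [(hexp γ⁻¹).tsum_eq, coeff_rescale, coeff_exp, poissonRate, neg_mul, mul_pow, ← pow_mul]
  simp only [one_div, map_inv₀, map_natCast]
  ring

lemma tendsto_classCount_withComponents_of_eq_zero (hpos : ∀ n, 0 < classCount C n)
    (hC : Tendsto (fun n => coeff (n + 1) C.egf / coeff n C.egf) atTop (𝓝 0))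
    (hDC : ∀ (V : Type) [Finite V] (G : SimpleGraph V), D V G → C V G)
    (hIso : ClassIsoInvariant D) (hH : H.Connected) (hD : D.SumInvariant H) (k : ℕ) :
    Tendsto (fun n => (classCount (D.withComponents H k) n / classCount C n : ℝ)) atTop (𝓝 0) := by
  have := hH.nonempty
  have : Finite (H ≃g H) := DFunLike.finite _
  have hAut : (0 : ℝ) < Nat.card (H ≃g H) := Nat.cast_pos.2 Nat.card_pos
  have hshift := tendsto_shift_div (fun n => (coeff_egf_pos hpos n).ne') hC (Nat.card U)
  rw [zero_pow Nat.card_pos.ne'] at hshift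
  let c : ℝ := (Nat.card (H ≃g H) : ℝ)⁻¹ / (k + 1)
  have hc : 0 < c := by positivity
  have hle (n : ℕ) : c * coeff n (D.withComponents H k).egf ≤ coeff (n + Nat.card U) C.egf := by
    calc
      _ = coeff (n + Nat.card U) (D.withComponents H (k + 1)).egf := by
        rw [GraphClassOn.egf_withComponents_succ hIso hH hD, monomial_eq_C_mul_X_pow, mul_assoc,
          coeff_C_mul, coeff_X_pow_mul]
      _ ≤ coeff (n + Nat.card U) C.egf := by
        simp only [GraphClassOn.egf, coeff_mk]
        gcongr
        exact classCount_mono (fun V _ G hG => hDC V G hG.1) _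
  refine squeeze_zero (fun n => by positivity) (fun n => ?_) (by simpa using hshift.const_mul c⁻¹)
  rw [← GraphClassOn.coeff_egf_div_coeff_egf, ← mul_div_assoc]
  have := coeff_egf_pos hpos n
  gcongr
  exact (le_inv_mul_iff₀ hc).2 (hle n)

lemma exists_tendsto_classCount_withComponents (hIso : ClassIsoInvariant C)
    (hC : ClassDecomposable C) (hpos : ∀ n, 0 < classCount C n) (hSmooth : ClassSmooth C)
    (hH : H.Connected) (k : ℕ) :
    ∃ π : ℝ, ∀ D : GraphClassOn, ClassIsoInvariant D →
      (∀ (V : Type) [Finite V] (G : SimpleGraph V), D V G → C V G) →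
      (C U H → D.SumInvariant H) → ∀ p : ℝ,
      Tendsto (fun n => (classCount D n / classCount C n : ℝ)) atTop (𝓝 p) →
      Tendsto (fun n => (classCount (D.withComponents H k) n / classCount C n : ℝ)) atTop
        (𝓝 (p * π)) := by
  obtain ⟨γ, hγ⟩ := hSmooth
  have hratio := tendsto_coeff_egf_succ_div hγ
  by_cases hCH : C U H
  · by_cases hγ0 : γ = 0
    · subst hγ0
      refine ⟨0, fun D hD hDC hinv p _ => ?_⟩
      rw [mul_zero]
      exact tendsto_classCount_withComponents_of_eq_zero hpos hratio hDC hD hH (hinv hCH) k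
    · exact ⟨_, fun D hD _ hinv p hp =>
        tendsto_classCount_withComponents_of_ne_zero hpos hγ0 hratio hD hH (hinv hCH) hp k⟩
  · refine ⟨if k = 0 then 1 else 0, fun D _ hDC _ p hp => ?_⟩
    have hcount (n : ℕ) := classCount_withComponents_of_forall_eq_zero (H := H) (n := n)
      (fun G hG => hC.numComponentsIso_eq_zero hIso hCH (hDC _ G hG)) k
    simp_rw [hcount]
    split_ifs
    · simpa using hp
    · simp

end Limits

theorem components_iso_asymptotically_independent_general
    (C : GraphClassOn) (hIso : ClassIsoInvariant C) (hDec : ClassDecomposable C)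
    (hSmooth : ClassSmooth C)
    (hne : ∀ n : ℕ, 1 ≤ n → ∃ G : SimpleGraph (Fin n), C (Fin n) G)
    (V₁ V₂ : Type) [Finite V₁] [Finite V₂]
    (H₁ : SimpleGraph V₁) (H₂ : SimpleGraph V₂)
    (hH₁ : H₁.Connected) (hH₂ : H₂.Connected)
    (hNonIso : ¬Nonempty (H₁ ≃g H₂)) (k₁ k₂ : ℕ) :
    ∃ p₁ p₂ : ℝ,
      Tendsto (fun n : ℕ => classProb C n (fun G => numComponentsIso G H₁ = k₁))
        atTop (𝓝 p₁) ∧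
      Tendsto (fun n : ℕ => classProb C n (fun G => numComponentsIso G H₂ = k₂))
        atTop (𝓝 p₂) ∧
      Tendsto (fun n : ℕ => classProb C n
          (fun G => numComponentsIso G H₁ = k₁ ∧ numComponentsIso G H₂ = k₂))
        atTop (𝓝 (p₁ * p₂)) := by
  have hpos (n : ℕ) : 0 < classCount C n := by
    obtain rfl | hn := n.eq_zero_or_pos
    · exact hDec.classCount_zero_pos
    · exact classCount_pos_iff.2 (hne n hn)
  obtain ⟨p₁, h₁⟩ := exists_tendsto_classCount_withComponents hIso hDec hpos hSmooth hH₁ k₁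
  obtain ⟨p₂, h₂⟩ := exists_tendsto_classCount_withComponents hIso hDec hpos hSmooth hH₂ k₂
  have hself : Tendsto (fun n => (classCount C n / classCount C n : ℝ)) atTop (𝓝 1) := by
    simp [(hpos _).ne']
  have hsingle₁ := h₁ C hIso (fun _ _ _ hG => hG) (hDec.sumInvariant hIso) 1 hself
  have hsingle₂ := h₂ C hIso (fun _ _ _ hG => hG) (hDec.sumInvariant hIso) 1 hself
  rw [one_mul] at hsingle₁ hsingle₂
  have hjoint := h₂ (C.withComponents H₁ k₁)
    (GraphClassOn.isoInvariant_withComponents hIso H₁ k₁) (fun _ _ _ hG => hG.1)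
    (fun hCH₂ => (hDec.sumInvariant hIso hCH₂).withComponents_of_not_iso hH₂
      (fun ⟨e⟩ => hNonIso ⟨e.symm⟩) k₁) p₁ hsingle₁
  refine ⟨p₁, p₂, hsingle₁, hsingle₂, ?_⟩
  simp only [classProb, ← and_assoc]
  exact hjoint

/-- For a smooth addable class and non-isomorphic connected graphs
`H₁, H₂`, the events of having exactly `k₁` components isomorphic to `H₁` and exactly
`k₂` components isomorphic to `H₂` are asymptotically independent. -/
theorem components_iso_asymptotically_independent
    (C : GraphClassOn) (hIso : ClassIsoInvariant C) (hAdd : ClassAddable C)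
    (hSmooth : ClassSmooth C)
    (hne : ∀ n : ℕ, 1 ≤ n → ∃ G : SimpleGraph (Fin n), C (Fin n) G)
    (V₁ V₂ : Type) [Finite V₁] [Finite V₂]
    (H₁ : SimpleGraph V₁) (H₂ : SimpleGraph V₂)
    (hH₁ : H₁.Connected) (hH₂ : H₂.Connected)
    (hNonIso : ¬Nonempty (H₁ ≃g H₂)) (k₁ k₂ : ℕ) :
    ∃ p₁ p₂ : ℝ,
      Tendsto (fun n : ℕ => classProb C n (fun G => numComponentsIso G H₁ = k₁))
        atTop (𝓝 p₁) ∧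
      Tendsto (fun n : ℕ => classProb C n (fun G => numComponentsIso G H₂ = k₂))
        atTop (𝓝 p₂) ∧
      Tendsto (fun n : ℕ => classProb C n
          (fun G => numComponentsIso G H₁ = k₁ ∧ numComponentsIso G H₂ = k₂))
        atTop (𝓝 (p₁ * p₂)) :=
  components_iso_asymptotically_independent_general C hIso hAdd.1 hSmooth hne V₁ V₂ H₁ H₂ hH₁ hH₂
    hNonIso k₁ k₂
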